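/- Suppose there exists a smooth strictly convex function φ : ℝⁿ → ℝ whose gradient map Dφ is a diffeomorphism from ℝⁿ onto the interior P° of P and which satisfies the real Monge–Ampère equation det(D²φ(x)) = exp(−c₀ − φ(x) − ⟨c, Dφ(x)⟩) for all x ∈ ℝⁿ, where c = (c₁,…,cₙ) ∈ ℝⁿ and c₀ ∈ ℝ are constants. Then necessarily ∫_P yᵢ e^{⟨c,y⟩} dy = 0 for every i = 1,…,n. -/

import Mathlib

open MeasureTheory

noncomputable section

/-- Dot product on `Fin n → ℝ`. -/
def dotp {n : ℕ} (x y : Fin n → ℝ) : ℝ := ∑ j, x j * y j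

/-- The gradient of a function on `Fin n → ℝ`. -/
def grad {n : ℕ} (f : (Fin n → ℝ) → ℝ) (x : Fin n → ℝ) : Fin n → ℝ :=
  fun p => fderiv ℝ f x (Pi.single p 1)

/-- Second partial derivatives (Hessian matrix) of a function on `Fin n → ℝ`. -/
def hess {n : ℕ} (f : (Fin n → ℝ) → ℝ) (x : Fin n → ℝ) : Matrix (Fin n) (Fin n) ℝ :=
  Matrix.of fun p q => fderiv ℝ (fun z => fderiv ℝ f z (Pi.single q 1)) x (Pi.single p 1)

/-!
By the Monge–Ampère equation, the gradient map carries the measure `exp (-φ x) dx` on `ℝⁿ` to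
`exp (c₀ + ⟨c, y⟩) dy` on its image, which fills `P` up to a null set. Hence the `i`-th moment of
the latter is `∫ ∂ᵢφ exp (-φ) = -∫ ∂ᵢ (exp (-φ))`. Since `P` is bounded, both `exp (-φ)` and its
partial derivatives are integrable, and so this integral of a derivative vanishes.
-/

section HaarMeasure

variable {E F : Type*} [NormedAddCommGroup E] [NormedSpace ℝ E] [FiniteDimensional ℝ E]
  [MeasurableSpace E] [BorelSpace E] [NormedAddCommGroup F] [NormedSpace ℝ F]
  (μ : Measure E) [μ.IsAddHaarMeasure]

theorem integrableOn_range_smul_iff_of_abs_det_fderiv_mul_eq {T : E → E} {w ρ : E → ℝ}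
    (hT : Differentiable ℝ T) (hinj : Function.Injective T)
    (hw : ∀ x, |(fderiv ℝ T x).det| * w (T x) = ρ x) (g : E → F) :
    IntegrableOn (fun y => w y • g y) (Set.range T) μ ↔ Integrable (fun x => ρ x • g (T x)) μ := by
  rw [← Set.image_univ, integrableOn_image_iff_integrableOn_abs_det_fderiv_smul μ .univ
    (fun x _ => (hT x).hasFDerivAt.hasFDerivWithinAt) hinj.injOn, integrableOn_univ]
  simp only [smul_smul, hw]

theorem setIntegral_range_smul_of_abs_det_fderiv_mul_eq {T : E → E} {w ρ : E → ℝ}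
    (hT : Differentiable ℝ T) (hinj : Function.Injective T)
    (hw : ∀ x, |(fderiv ℝ T x).det| * w (T x) = ρ x) (g : E → F) :
    ∫ y in Set.range T, w y • g y ∂μ = ∫ x, ρ x • g (T x) ∂μ := by
  rw [← Set.image_univ, integral_image_eq_integral_abs_det_fderiv_smul μ .univ
    (fun x _ => (hT x).hasFDerivAt.hasFDerivWithinAt) hinj.injOn, setIntegral_univ]
  simp only [smul_smul, hw]

variable {μ}

theorem integral_fderiv_apply_eq_zero {f : E → F} {v : E} (hf : Differentiable ℝ f)
    (hf_int : Integrable f μ) (hf'_int : Integrable (fun x => fderiv ℝ f x v) μ) :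
    ∫ x, fderiv ℝ f x v ∂μ = 0 := by
  simpa using integral_smul_fderiv_eq_neg_fderiv_smul_of_integrable (𝕜 := ℝ) (μ := μ)
    (f := fun _ => 1) (g := f) (v := v) (by simp) (by simpa using hf'_int) (by simpa using hf_int)
    (fun _ _ => differentiableAt_const _) (fun x _ => hf x)

theorem integral_exp_neg_mul_fderiv_apply_eq_zero {φ : E → ℝ} {v : E} (hφ : Differentiable ℝ φ)
    (hexp : Integrable (fun x => Real.exp (-φ x)) μ)
    (hexp' : Integrable (fun x => Real.exp (-φ x) * fderiv ℝ φ x v) μ) :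
    ∫ x, Real.exp (-φ x) * fderiv ℝ φ x v ∂μ = 0 := by
  have hderiv : ∀ x, fderiv ℝ (fun z => Real.exp (-φ z)) x v =
      -(Real.exp (-φ x) * fderiv ℝ φ x v) := fun x => by
    simp [(hφ x).hasFDerivAt.fun_neg.exp.fderiv]
  have hzero := integral_fderiv_apply_eq_zero (v := v) hφ.fun_neg.exp hexp
    (by simpa only [hderiv] using hexp'.fun_neg)
  simpa only [hderiv, integral_neg, neg_eq_zero] using hzero

end HaarMeasure

theorem integrableOn_of_continuous_of_isBounded {X F : Type*} [MetricSpace X] [ProperSpace X]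
    [MeasurableSpace X] [OpensMeasurableSpace X] [NormedAddCommGroup F] {μ : Measure X}
    [IsFiniteMeasureOnCompacts μ] {f : X → F} {s : Set X} (hf : Continuous f)
    (hs : Bornology.IsBounded s) : IntegrableOn f s μ :=
  (hf.continuousOn.integrableOn_compact hs.isCompact_closure).mono_set subset_closure

section Gradient

variable {n : ℕ} {φ : (Fin n → ℝ) → ℝ}

theorem continuous_dotp (c : Fin n → ℝ) : Continuous (dotp c) := by
  unfold dotp
  fun_prop

theorem differentiable_grad (hφ : ContDiff ℝ 2 φ) : Differentiable ℝ (grad φ) :=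
  differentiable_pi.2 fun _ =>
    ((hφ.fderiv_right (m := 1) (by norm_num)).differentiable one_ne_zero).clm_apply
      (differentiable_const _)

theorem toMatrix'_fderiv_grad {x : Fin n → ℝ} (h : DifferentiableAt ℝ (grad φ) x) :
    LinearMap.toMatrix' (fderiv ℝ (grad φ) x : (Fin n → ℝ) →ₗ[ℝ] Fin n → ℝ) =
      (hess φ x).transpose := by
  ext p q
  have hcoord : fderiv ℝ (fun z => grad φ z p) x = (ContinuousLinearMap.proj p).comp
      (fderiv ℝ (grad φ) x) := (hasFDerivAt_pi'.1 h.hasFDerivAt p).fderiv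
  change fderiv ℝ (grad φ) x (Pi.single q 1) p = fderiv ℝ (fun z => grad φ z p) x (Pi.single q 1)
  rw [hcoord]
  rfl

theorem det_fderiv_grad {x : Fin n → ℝ} (h : DifferentiableAt ℝ (grad φ) x) :
    (fderiv ℝ (grad φ) x).det = (hess φ x).det := by
  rw [ContinuousLinearMap.det, ← LinearMap.det_toMatrix', toMatrix'_fderiv_grad h,
    Matrix.det_transpose]

theorem setIntegral_range_grad_mul_apply_eq_zero {w : (Fin n → ℝ) → ℝ} {i : Fin n}
    (hφ : Differentiable ℝ φ) (hgrad : Differentiable ℝ (grad φ))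
    (hinj : Function.Injective (grad φ))
    (hw : ∀ x, |(hess φ x).det| * w (grad φ x) = Real.exp (-φ x))
    (hw_int : IntegrableOn w (Set.range (grad φ)))
    (hmoment_int : IntegrableOn (fun y => w y * y i) (Set.range (grad φ))) :
    ∫ y in Set.range (grad φ), w y * y i = 0 := by
  have hdensity : ∀ x, |(fderiv ℝ (grad φ) x).det| * w (grad φ x) = Real.exp (-φ x) := fun x => by
    rw [det_fderiv_grad (hgrad x), hw]
  have hexp : Integrable (fun x => Real.exp (-φ x)) := by
    simpa using (integrableOn_range_smul_iff_of_abs_det_fderiv_mul_eq volume hgrad hinj hdensity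
      fun _ => (1 : ℝ)).1 (by simpa using hw_int)
  have hexp' : Integrable (fun x => Real.exp (-φ x) * grad φ x i) :=
    (integrableOn_range_smul_iff_of_abs_det_fderiv_mul_eq volume hgrad hinj hdensity
      fun y => y i).1 hmoment_int
  calc ∫ y in Set.range (grad φ), w y * y i
      = ∫ x, Real.exp (-φ x) * grad φ x i :=
        setIntegral_range_smul_of_abs_det_fderiv_mul_eq volume hgrad hinj hdensity fun y => y i
    _ = 0 := integral_exp_neg_mul_fderiv_apply_eq_zero hφ hexp hexp'

end Gradient

theorem necessary_condition_on_c_general {n : ℕ} {P : Set (Fin n → ℝ)} {c : Fin n → ℝ} {c₀ : ℝ}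
    {φ : (Fin n → ℝ) → ℝ} (hP : Bornology.IsBounded P)
    (hφ : Differentiable ℝ φ) (hgrad : Differentiable ℝ (grad φ))
    (hinj : Function.Injective (grad φ)) (hrange : Set.range (grad φ) =ᵐ[volume] P)
    (hMA : ∀ x, (hess φ x).det = Real.exp (-c₀ - φ x - dotp c (grad φ x))) (i : Fin n) :
    ∫ y in P, y i * Real.exp (dotp c y) = 0 := by
  have hw : ∀ x, |(hess φ x).det| * Real.exp (c₀ + dotp c (grad φ x)) = Real.exp (-φ x) :=
    fun x => by
      rw [hMA, Real.abs_exp, ← Real.exp_add]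
      ring_nf
  have hw_cont : Continuous fun y => Real.exp (c₀ + dotp c y) :=
    ((continuous_dotp c).const_add c₀).rexp
  have hint : ∀ f : (Fin n → ℝ) → ℝ, Continuous f → IntegrableOn f (Set.range (grad φ)) :=
    fun f hf => (integrableOn_of_continuous_of_isBounded hf hP).congr_set_ae hrange
  have hzero : Real.exp c₀ * ∫ y in P, y i * Real.exp (dotp c y) = 0 := by
    calc Real.exp c₀ * ∫ y in P, y i * Real.exp (dotp c y)
        = ∫ y in P, Real.exp (c₀ + dotp c y) * y i := by
          simp only [← integral_const_mul, Real.exp_add, mul_comm, mul_left_comm]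
      _ = ∫ y in Set.range (grad φ), Real.exp (c₀ + dotp c y) * y i :=
          (setIntegral_congr_set hrange).symm
      _ = 0 := setIntegral_range_grad_mul_apply_eq_zero hφ hgrad hinj hw (hint _ hw_cont)
          (hint _ (hw_cont.mul (continuous_apply i)))
  exact (mul_eq_zero.1 hzero).resolve_left (Real.exp_ne_zero c₀)

/-- If a smooth strictly convex `φ : ℝⁿ → ℝ`, whose gradient map is a diffeomorphism
from `ℝⁿ` onto `P°`, solves `det D²φ = exp(-c₀ - φ - ⟨c, Dφ⟩)`, then necessarily
`∫_P yᵢ e^{⟨c,y⟩} dy = 0` for every `i` (Proposition 3.1). -/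
theorem necessary_condition_on_c {n : ℕ} (V : Finset (Fin n → ℝ)) (P : Set (Fin n → ℝ))
    (hP : P = convexHull ℝ (V : Set (Fin n → ℝ)))
    (h0 : (0 : Fin n → ℝ) ∈ interior P)
    (c : Fin n → ℝ) (c₀ : ℝ) (φ : (Fin n → ℝ) → ℝ)
    (hφ : ContDiff ℝ (⊤ : ℕ∞) φ)
    (hconv : StrictConvexOn ℝ Set.univ φ)
    (hbij : Set.BijOn (grad φ) Set.univ (interior P))
    (hinv : ContDiffOn ℝ (⊤ : ℕ∞) (Function.invFun (grad φ)) (interior P))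
    (hMA : ∀ x, (hess φ x).det = Real.exp (-c₀ - φ x - dotp c (grad φ x))) :
    ∀ i, ∫ y in P, y i * Real.exp (dotp c y) = 0 := by
  subst hP
  have hrange : Set.range (grad φ) =ᵐ[volume] convexHull ℝ (V : Set (Fin n → ℝ)) := by
    rw [← Set.image_univ, hbij.image_eq]
    exact interior_ae_eq_of_null_frontier ((convex_convexHull ℝ _).addHaar_frontier volume)
  exact necessary_condition_on_c_general (isBounded_convexHull.2 V.finite_toSet.isBounded)
    (hφ.differentiable (by simp)) (differentiable_grad (hφ.of_le (by norm_cast)))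
    (Set.injOn_univ.1 hbij.injOn) hrange hMA
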